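/- Let U be a real normed linear space and let n ≥ 3 be a fixed integer. Then the norm of U arises from an inner product (i.e. there exists an inner product ⟨·,·⟩ on U with ⟨x,x⟩ = ‖x‖² for all x ∈ U) if and only if n·∑_{1≤i<j≤n} ‖x_i − x_j‖² = ∑_{i=1}^{n} ‖(∑_{j=1}^{n} x_j) − n·x_i‖² for all x_1, …, x_n ∈ U. -/

import Mathlib

/-!
In an inner product space both sides of the identity equal `n * (n * ∑ ‖x i‖ ^ 2 - ‖∑ x i‖ ^ 2)`.

Conversely, restrict the identity to tuples with sum zero. There it descends from `n` to every
smaller length by padding with zeros, so it holds for the triples `(a, b, -(a + b))`. For the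
parallelogram defect `D a b = ‖a + b‖ ^ 2 + ‖a - b‖ ^ 2 - 2 * (‖a‖ ^ 2 + ‖b‖ ^ 2)`, the triples with
`b` and `-b` give `D (2a) b + D a (2b) = 2 D a b`. Since `D (2a) (2b) = 4 D a b`, the sequence
`u k = D a (2 ^ k b)` satisfies `u (k + 2) = 2 u (k + 1) - 4 u k`, whence `u 3 = -8 u 0`.
As `D a` is bounded below by `-2 ‖a‖ ^ 2`, this forces `D = 0`, the parallelogram law.
-/

open Finset

lemma eq_zero_of_bddBelow_range_of_map_eq_mul {α : Type*} {f : α → ℝ} {g : α → α} {r : ℝ}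
    (hr : r < -1) (hf : BddBelow (Set.range f)) (hfg : ∀ x, f (g x) = r * f x) (x : α) :
    f x = 0 := by
  have : Nonempty α := ⟨x⟩
  have one_lt_sq : 1 < r ^ 2 := by nlinarith
  have iInf_le_mul (y : α) : (⨅ z, f z) ≤ r ^ 2 * f y := by
    simpa only [hfg, ← mul_assoc, ← sq] using ciInf_le hf (g (g y))
  have iInf_nonneg : 0 ≤ ⨅ z, f z := by
    have iInf_div_le : (⨅ z, f z) / r ^ 2 ≤ ⨅ z, f z :=
      le_ciInf fun y ↦ (div_le_iff₀' (by positivity)).2 (iInf_le_mul y)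
    rw [div_le_iff₀ (by positivity)] at iInf_div_le
    nlinarith
  have nonneg (y : α) : 0 ≤ f y := iInf_nonneg.trans (ciInf_le hf y)
  have mul_nonneg : 0 ≤ r * f x := hfg x ▸ nonneg (g x)
  exact le_antisymm (nonpos_of_mul_nonneg_right mul_nonneg (by linarith)) (nonneg x)

lemma sum_sum_eq_two_nsmul_sum_filter_lt {ι M : Type*} [Fintype ι] [LinearOrder ι]
    [AddCommMonoid M] {f : ι → ι → M} (hsymm : ∀ i j, f i j = f j i) (hdiag : ∀ i, f i i = 0) :
    ∑ i, ∑ j, f i j = 2 • ∑ p : ι × ι with p.1 < p.2, f p.1 p.2 := by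
  have split (p : ι × ι) : f p.1 p.2 =
      (if p.1 < p.2 then f p.1 p.2 else 0) + if p.2 < p.1 then f p.2 p.1 else 0 := by
    rcases lt_trichotomy p.1 p.2 with h | h | h
    · simp [h, h.not_gt]
    · simp [h, hdiag]
    · simp [h, h.not_gt, hsymm p.1 p.2]
  have swap : ∑ p : ι × ι, (if p.2 < p.1 then f p.2 p.1 else 0) =
      ∑ p : ι × ι, if p.1 < p.2 then f p.1 p.2 else 0 :=
    (Equiv.prodComm ι ι).sum_comp fun p ↦ if p.1 < p.2 then f p.1 p.2 else 0
  rw [← Fintype.sum_prod_type', Fintype.sum_congr _ _ split, sum_add_distrib, swap, two_nsmul,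
    sum_filter]

lemma sum_sum_norm_sub_sq_eq_two_mul_sum_filter_lt {ι E : Type*} [Fintype ι] [LinearOrder ι]
    [SeminormedAddCommGroup E] (x : ι → E) :
    ∑ i, ∑ j, ‖x i - x j‖ ^ 2 = 2 * ∑ p : ι × ι with p.1 < p.2, ‖x p.1 - x p.2‖ ^ 2 := by
  rw [sum_sum_eq_two_nsmul_sum_filter_lt (fun i j ↦ by rw [norm_sub_rev]) (by simp),
    nsmul_eq_mul, Nat.cast_ofNat]

section InnerProductSpace

variable {ι E : Type*} [Fintype ι] [SeminormedAddCommGroup E] [InnerProductSpace ℝ E]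

lemma sum_sum_norm_sub_sq (x : ι → E) :
    ∑ i, ∑ j, ‖x i - x j‖ ^ 2 =
      2 * (Fintype.card ι * ∑ i, ‖x i‖ ^ 2 - ‖∑ i, x i‖ ^ 2) := by
  simp only [norm_sub_sq_real, sum_add_distrib, sum_sub_distrib, ← mul_sum, ← inner_sum,
    ← sum_inner, real_inner_self_eq_norm_sq, sum_const, card_univ, nsmul_eq_mul]
  ring

lemma sum_norm_sum_sub_card_nsmul_sq (x : ι → E) :
    ∑ i, ‖∑ j, x j - Fintype.card ι • x i‖ ^ 2 =
      Fintype.card ι * (Fintype.card ι * ∑ i, ‖x i‖ ^ 2 - ‖∑ i, x i‖ ^ 2) := by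
  simp only [norm_sub_sq_real, ← Nat.cast_smul_eq_nsmul ℝ, inner_smul_right, norm_smul, mul_pow,
    Real.norm_natCast, sum_add_distrib, sum_sub_distrib, ← mul_sum, ← inner_sum,
    real_inner_self_eq_norm_sq, sum_const, card_univ]
  ring

end InnerProductSpace

/-- The identity `∑ i, ∑ j, ‖x i - x j‖ ^ 2 = 2 * (n * ∑ i, ‖x i‖ ^ 2 - ‖∑ i, x i‖ ^ 2)` of inner
product spaces, for the `n`-tuples in `E` whose sum is zero. The double sum runs over ordered
pairs, so each pair is counted twice. -/
def ZeroSumIdentity (E : Type*) [SeminormedAddCommGroup E] (n : ℕ) : Prop :=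
  ∀ x : Fin n → E, ∑ i, x i = 0 → ∑ i, ∑ j, ‖x i - x j‖ ^ 2 = 2 * (n * ∑ i, ‖x i‖ ^ 2)

lemma sum_sum_norm_append_zero_sub_sq {E : Type*} [SeminormedAddCommGroup E] {k : ℕ}
    (x : Fin k → E) (m : ℕ) :
    ∑ i, ∑ j, ‖Fin.append x (0 : Fin m → E) i - Fin.append x (0 : Fin m → E) j‖ ^ 2 =
      ∑ i, ∑ j, ‖x i - x j‖ ^ 2 + 2 * (m * ∑ i, ‖x i‖ ^ 2) := by
  simp only [Fin.sum_univ_add, Fin.append_left, Fin.append_right, Pi.zero_apply, sub_zero,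
    zero_sub, norm_neg, norm_zero, sum_add_distrib, sum_const, card_univ, Fintype.card_fin,
    nsmul_eq_mul, ← mul_sum]
  ring

lemma ZeroSumIdentity.mono {E : Type*} [SeminormedAddCommGroup E] {k n : ℕ} (hkn : k ≤ n)
    (h : ZeroSumIdentity E n) : ZeroSumIdentity E k := by
  obtain ⟨m, rfl⟩ := Nat.exists_eq_add_of_le hkn
  intro x hx
  have padded := h (Fin.append x 0) (by simp [Fin.sum_univ_add, hx])
  rw [sum_sum_norm_append_zero_sub_sq] at padded
  simp only [Fin.sum_univ_add, Fin.append_left, Fin.append_right, Pi.zero_apply, norm_zero,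
    ne_eq, OfNat.ofNat_ne_zero, not_false_eq_true, zero_pow, sum_const_zero, add_zero,
    Nat.cast_add] at padded
  linarith

/-- The failure of the parallelogram law at `a` and `b`; it vanishes identically exactly when the
norm comes from an inner product (Jordan–von Neumann). -/
def parallelogramDefect {E : Type*} [SeminormedAddCommGroup E] (a b : E) : ℝ :=
  ‖a + b‖ ^ 2 + ‖a - b‖ ^ 2 - 2 * (‖a‖ ^ 2 + ‖b‖ ^ 2)

section NormedSpace

variable {E : Type*} [SeminormedAddCommGroup E] [NormedSpace ℝ E]

lemma parallelogramDefect_smul_smul (c : ℝ) (a b : E) :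
    parallelogramDefect (c • a) (c • b) = c ^ 2 * parallelogramDefect a b := by
  simp only [parallelogramDefect, ← smul_add, ← smul_sub, norm_smul, mul_pow, Real.norm_eq_abs,
    sq_abs]
  ring

lemma neg_two_mul_norm_sq_le_parallelogramDefect (a b : E) :
    -(2 * ‖a‖ ^ 2) ≤ parallelogramDefect a b := by
  have triangle : 2 * ‖b‖ ≤ ‖a + b‖ + ‖a - b‖ :=
    calc 2 * ‖b‖ = ‖(a + b) - (a - b)‖ := by
          rw [show (a + b) - (a - b) = (2 : ℝ) • b by module, norm_smul, Real.norm_ofNat]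
      _ ≤ ‖a + b‖ + ‖a - b‖ := norm_sub_le _ _
  have squared : (2 * ‖b‖) ^ 2 ≤ 2 * (‖a + b‖ ^ 2 + ‖a - b‖ ^ 2) :=
    (pow_le_pow_left₀ (by positivity) triangle 2).trans add_sq_le
  rw [parallelogramDefect]
  linarith

namespace ZeroSumIdentity

lemma of_forall_sum_norm_sub_sq_eq {n : ℕ}
    (h : ∀ x : Fin n → E, n * ∑ p : Fin n × Fin n with p.1 < p.2, ‖x p.1 - x p.2‖ ^ 2 =
      ∑ i, ‖∑ j, x j - n • x i‖ ^ 2) :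
    ZeroSumIdentity E n := by
  intro x hx
  rcases n.eq_zero_or_pos with rfl | hn
  · simp
  have centered : n * ∑ p : Fin n × Fin n with p.1 < p.2, ‖x p.1 - x p.2‖ ^ 2 =
      n * (n * ∑ i, ‖x i‖ ^ 2) := by
    simp only [h, hx, zero_sub, norm_neg, ← Nat.cast_smul_eq_nsmul ℝ, norm_smul,
      Real.norm_natCast, mul_pow, ← mul_sum]
    ring
  rw [sum_sum_norm_sub_sq_eq_two_mul_sum_filter_lt,
    mul_left_cancel₀ (Nat.cast_ne_zero.2 hn.ne') centered]

lemma norm_sub_sq_add_norm_sq_add_norm_sq (h : ZeroSumIdentity E 3) (a b : E) :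
    ‖a - b‖ ^ 2 + ‖(2 : ℝ) • a + b‖ ^ 2 + ‖a + (2 : ℝ) • b‖ ^ 2 =
      3 * (‖a‖ ^ 2 + ‖b‖ ^ 2 + ‖a + b‖ ^ 2) := by
  have triple := h ![a, b, -(a + b)] (by simp [Fin.sum_univ_three])
  have hab : a - -(a + b) = (2 : ℝ) • a + b := by module
  have hba : b - -(a + b) = a + (2 : ℝ) • b := by module
  simp only [Fin.sum_univ_three, Matrix.cons_val, sub_self, norm_zero, norm_neg, hab, hba,
    norm_sub_rev b a, norm_sub_rev (-(a + b)), Nat.cast_ofNat] at triple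
  linarith

lemma parallelogramDefect_two_smul_add (h : ZeroSumIdentity E 3) (a b : E) :
    parallelogramDefect ((2 : ℝ) • a) b + parallelogramDefect a ((2 : ℝ) • b) =
      2 * parallelogramDefect a b := by
  have plus := h.norm_sub_sq_add_norm_sq_add_norm_sq a b
  have minus := h.norm_sub_sq_add_norm_sq_add_norm_sq a (-b)
  simp only [sub_neg_eq_add, smul_neg, ← sub_eq_add_neg, norm_neg] at minus
  simp only [parallelogramDefect, norm_smul, mul_pow, Real.norm_ofNat]
  linarith

lemma parallelogramDefect_eight_smul (h : ZeroSumIdentity E 3) (a b : E) :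
    parallelogramDefect a ((8 : ℝ) • b) = -8 * parallelogramDefect a b := by
  have recurrence (c : E) : parallelogramDefect a ((2 : ℝ) • (2 : ℝ) • c) =
      2 * parallelogramDefect a ((2 : ℝ) • c) - 4 * parallelogramDefect a c := by
    linarith [h.parallelogramDefect_two_smul_add a ((2 : ℝ) • c),
      parallelogramDefect_smul_smul 2 a c]
  rw [show (8 : ℝ) • b = (2 : ℝ) • (2 : ℝ) • (2 : ℝ) • b by module]
  linarith [recurrence b, recurrence ((2 : ℝ) • b)]

lemma parallelogramDefect_eq_zero (h : ZeroSumIdentity E 3) (a b : E) :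
    parallelogramDefect a b = 0 :=
  eq_zero_of_bddBelow_range_of_map_eq_mul (by norm_num)
    ⟨_, Set.forall_mem_range.2 (neg_two_mul_norm_sq_le_parallelogramDefect a)⟩
    (h.parallelogramDefect_eight_smul a) b

end ZeroSumIdentity

end NormedSpace

/-- For a real normed space `U` and a fixed integer `n ≥ 3`:
the norm of `U` arises from an inner product iff
`n·∑_{1≤i<j≤n} ‖x_i − x_j‖² = ∑_{i=1}^{n} ‖(∑_{j=1}^{n} x_j) − n·x_i‖²` for all
`x_1, …, x_n ∈ U`. -/
theorem stmt_6 {U : Type*} [NormedAddCommGroup U] [NormedSpace ℝ U]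
    (n : ℕ) (hn : 3 ≤ n) :
    (∃ inner : U → U → ℝ,
      (∀ x y : U, inner x y = inner y x) ∧
      (∀ x y z : U, inner (x + y) z = inner x z + inner y z) ∧
      (∀ (c : ℝ) (x y : U), inner (c • x) y = c * inner x y) ∧
      (∀ x : U, x ≠ 0 → 0 < inner x x) ∧
      (∀ x : U, inner x x = ‖x‖ ^ 2)) ↔
    (∀ x : Fin n → U,
      (n : ℝ) * ∑ p ∈ Finset.univ.filter (fun p : Fin n × Fin n => p.1 < p.2),
          ‖x p.1 - x p.2‖ ^ 2
        = ∑ i : Fin n, ‖(∑ j : Fin n, x j) - n • x i‖ ^ 2) := by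
  constructor
  · rintro ⟨B, symm, add_left, smul_left, -, norm_sq⟩ x
    let _ : InnerProductSpace ℝ U :=
      { inner := B
        norm_sq_eq_re_inner := fun x ↦ (norm_sq x).symm
        conj_inner_symm := fun x y ↦ symm y x
        add_left := add_left
        smul_left := fun x y c ↦ smul_left c x y }
    have pairs :=
      (sum_sum_norm_sub_sq_eq_two_mul_sum_filter_lt x).symm.trans (sum_sum_norm_sub_sq x)
    have deviations := sum_norm_sum_sub_card_nsmul_sq x
    rw [Fintype.card_fin] at pairs deviations
    rw [deviations, mul_left_cancel₀ two_ne_zero pairs]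
  · intro h
    have triples : ZeroSumIdentity U 3 := (ZeroSumIdentity.of_forall_sum_norm_sub_sq_eq h).mono hn
    let _ : InnerProductSpace ℝ U := InnerProductSpace.ofNorm ℝ fun x y ↦ by
      simpa only [parallelogramDefect, ← sq, sub_eq_zero] using
        triples.parallelogramDefect_eq_zero x y
    exact ⟨inner ℝ, fun x y ↦ real_inner_comm y x, inner_add_left,
      fun c x y ↦ real_inner_smul_left x y c, fun x hx ↦ real_inner_self_pos.2 hx,
      real_inner_self_eq_norm_sq⟩
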